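/- Let K be a finite field with q elements, let s ≥ 2, and let T be the projective torus in ℙ^{s−1} over K. Then |T| = (q−1)^{s−1}; moreover H_T(d) = (q−1)^{s−1} for every d ≥ (s−1)(q−2), and if q ≥ 3 then H_T((s−1)(q−2) − 1) < (q−1)^{s−1}; that is, the index of regularity of S/I(T) equals (s−1)(q−2) and its degree equals (q−1)^{s−1}. -/

import Mathlib

open MvPolynomial

/-- The projective torus in `ℙ^(s-1)` over `K`: the classes of points all of whose
coordinates are nonzero (a condition invariant under scaling, tested on the chosen
representative). -/
noncomputable def projTorus (K : Type) [Field K] (s : ℕ) :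
    Set (Projectivization K (Fin s → K)) :=
  {p | ∀ i, p.rep i ≠ 0}

/-- The Hilbert function of a set `Y` of points of projective space (equivalently the
dimension of the parameterized code of order `d` on `Y`): the `K`-dimension of the
space of functions on `Y` of the form `[P] ↦ F(P)/P_{i0}^d` with `F` homogeneous of
degree `d`. -/
noncomputable def hilbFn (K : Type) [Field K] {ι : Type}
    (Y : Set (Projectivization K (ι → K))) (i0 : ι) (d : ℕ) : ℕ :=
  Module.finrank K ↥(Submodule.span K
    {f : ↥Y → K | ∃ F : MvPolynomial ι K, F.IsHomogeneous d ∧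
      ∀ p : ↥Y, f p = eval p.1.rep F / (p.1.rep i0) ^ d})

/-!
In the chart `x₀ = 1` the torus of `ℙⁿ` is the grid `(K*)ⁿ`, and the argument works for any grid
`∏ Sᵢ` of finite sets in any field. A form of degree `∑ (#Sᵢ - 1)` that vanishes at every grid
point but one is a product of linear forms `xᵢ - b x₀`, so in that degree and above every function
on the grid is the restriction of a form. Conversely the iterated divided difference over the grid
reads off the coefficient of `∏ xᵢ ^ (#Sᵢ - 1)`; it is a nonzero functional that kills every form
of smaller degree.
-/

theorem eval_smul_of_isHomogeneous {R σ : Type*} [CommSemiring R] {F : MvPolynomial σ R} {d : ℕ}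
    (hF : F.IsHomogeneous d) (c : R) (x : σ → R) : eval (c • x) F = c ^ d * eval x F := by
  rw [eval_eq, eval_eq, Finset.mul_sum]
  refine Finset.sum_congr rfl fun m hm => ?_
  simp only [Pi.smul_apply, smul_eq_mul, mul_pow, Finset.prod_mul_distrib,
    Finset.prod_pow_eq_pow_sum, ← hF.degree_eq_sum_deg_support hm, mul_left_comm]

theorem exists_succ_lt_of_mem_support {R : Type*} [CommSemiring R] {n d : ℕ}
    {F : MvPolynomial (Fin (n + 1)) R} (hF : F.IsHomogeneous d) {k : Fin n → ℕ}
    (hd : d < ∑ i, k i) {m : Fin (n + 1) →₀ ℕ} (hm : m ∈ F.support) :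
    ∃ i : Fin n, m i.succ < k i := by
  have hdeg : ∑ j, m j = d := by
    rw [← Finsupp.degree_eq_sum, hF.degree_eq_sum_deg_support hm, Finsupp.degree_apply]
  have hlt : ∑ i : Fin n, m i.succ < ∑ i, k i := by
    rw [Fin.sum_univ_succ] at hdeg
    omega
  simpa using Finset.exists_lt_of_sum_lt hlt

theorem sum_nodalWeight_mul_pow_eq_zero {K : Type*} [Field K] [DecidableEq K] {s : Finset K}
    {k : ℕ} (hk : k < s.card - 1) : ∑ x ∈ s, Lagrange.nodalWeight s id x * x ^ k = 0 := by
  have hdeg : (Polynomial.X ^ k : Polynomial K).degree < s.card := by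
    rw [Polynomial.degree_X_pow]
    exact_mod_cast hk.trans_le (Nat.sub_le _ _)
  have hcoeff := Lagrange.coeff_eq_sum (Set.injOn_id (s : Set K)) hdeg
  rw [Polynomial.coeff_X_pow, if_neg hk.ne'] at hcoeff
  simpa only [Lagrange.nodalWeight, Finset.prod_inv_distrib, Polynomial.eval_pow,
    Polynomial.eval_X, id_eq, div_eq_inv_mul] using hcoeff.symm

section AffineChart

variable {K : Type*} [Field K] {n : ℕ}

/-- The point `[1 : u₁ : ⋯ : uₙ]`: the inclusion of the standard affine chart `x₀ ≠ 0` into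
projective space. -/
def affinePoint (u : Fin n → K) : Projectivization K (Fin (n + 1) → K) :=
  .mk K (Fin.cons 1 u) fun h => one_ne_zero (congrFun h 0)

theorem affinePoint_injective : Function.Injective (affinePoint : (Fin n → K) → _) := by
  intro u w h
  obtain ⟨c, hc⟩ := (Projectivization.mk_eq_mk_iff' K _ _ _ _).1 h
  obtain rfl : c = 1 := by simpa using congrFun hc 0
  exact (Fin.cons_right_injective _ (by simpa only [one_smul] using hc)).symm

theorem exists_rep_affinePoint_eq_smul (u : Fin n → K) :
    ∃ c : K, c ≠ 0 ∧ (affinePoint u).rep = c • (Fin.cons 1 u : Fin (n + 1) → K) := by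
  obtain ⟨c, hc⟩ := Projectivization.exists_smul_eq_mk_rep K (Fin.cons 1 u : Fin (n + 1) → K) _
  exact ⟨c, c.ne_zero, hc.symm⟩

theorem affinePoint_rep_div {p : Projectivization K (Fin (n + 1) → K)} (hp : p.rep 0 ≠ 0) :
    affinePoint (fun i => p.rep i.succ / p.rep 0) = p := by
  conv_rhs => rw [← p.mk_rep]
  refine (Projectivization.mk_eq_mk_iff' K _ _ _ _).2 ⟨(p.rep 0)⁻¹, funext fun i => ?_⟩
  cases i using Fin.cases <;> simp [hp, div_eq_inv_mul]

theorem eval_rep_affinePoint_div {d : ℕ} {F : MvPolynomial (Fin (n + 1)) K}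
    (hF : F.IsHomogeneous d) (u : Fin n → K) :
    eval (affinePoint u).rep F / (affinePoint u).rep 0 ^ d = eval (Fin.cons 1 u) F := by
  obtain ⟨c, hc, hrep⟩ := exists_rep_affinePoint_eq_smul u
  rw [hrep, eval_smul_of_isHomogeneous hF, Pi.smul_apply, Fin.cons_zero, smul_eq_mul, mul_one,
    mul_div_cancel_left₀ _ (pow_ne_zero d hc)]

end AffineChart

section FormFunctions

variable {R : Type*} [CommSemiring R] {n d : ℕ}

/-- The space of functions on a set `A` of affine space obtained by evaluating forms of degree `d`
at the normalized coordinates `(1, u)`. -/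
noncomputable def formFunctions (A : Set (Fin n → R)) (d : ℕ) : Submodule R (A → R) :=
  (homogeneousSubmodule (Fin (n + 1)) R d).map
    (LinearMap.pi fun u : A => (aeval (Fin.cons 1 u.1 : Fin (n + 1) → R)).toLinearMap)

theorem mem_formFunctions {A : Set (Fin n → R)} {f : A → R} :
    f ∈ formFunctions A d ↔ ∃ F : MvPolynomial (Fin (n + 1)) R, F.IsHomogeneous d ∧
      ∀ u : A, f u = eval (Fin.cons 1 u.1) F := by
  simp [formFunctions, funext_iff, aeval_eq_eval, eq_comm]

theorem hilbFn_image_affinePoint {K : Type} [Field K] (A : Set (Fin n → K)) (d : ℕ) :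
    hilbFn K (affinePoint '' A) 0 d = Module.finrank K (formFunctions A d) := by
  let e : A ≃ affinePoint '' A := Equiv.Set.image _ A affinePoint_injective
  have hset : {f : affinePoint '' A → K | ∃ F : MvPolynomial (Fin (n + 1)) K,
      F.IsHomogeneous d ∧ ∀ p : affinePoint '' A, f p = eval p.1.rep F / p.1.rep 0 ^ d} =
      (formFunctions A d).map (LinearEquiv.funCongrLeft K K e.symm).toLinearMap := by
    ext f
    rw [SetLike.mem_coe, Submodule.mem_map_equiv, mem_formFunctions]
    refine exists_congr fun F => and_congr_right fun hF => ?_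
    rw [← e.forall_congr_right]
    refine forall_congr' fun u => ?_
    rw [← eval_rep_affinePoint_div hF]
    rfl
  rw [hilbFn, hset, Submodule.span_eq, LinearEquiv.finrank_map_eq]

end FormFunctions

section LagrangeForm

variable {R : Type*} [CommRing R] [DecidableEq R] {n : ℕ} {S : Fin n → Finset R}

/-- The form `∏ᵢ ∏_{b ∈ Sᵢ, b ≠ aᵢ} (xᵢ - b x₀)`, which vanishes at every point `(1, u)` of the grid
`∏ Sᵢ` other than `(1, a)`: the homogenized, unnormalized Lagrange basis polynomial at `a`. -/
noncomputable def lagrangeForm (S : Fin n → Finset R) (a : Fin n → R) :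
    MvPolynomial (Fin (n + 1)) R :=
  ∏ i, ∏ b ∈ (S i).erase (a i), (X i.succ - C b * X 0)

theorem isHomogeneous_lagrangeForm {a : Fin n → R} (ha : ∀ i, a i ∈ S i) :
    (lagrangeForm S a).IsHomogeneous (∑ i, ((S i).card - 1)) := by
  refine IsHomogeneous.prod _ _ _ fun i _ => ?_
  rw [← Finset.card_erase_of_mem (ha i), Finset.card_eq_sum_ones]
  exact IsHomogeneous.prod _ _ _ fun b _ => (isHomogeneous_X _ _).sub (isHomogeneous_C_mul_X _ _)

theorem eval_lagrangeForm_eq_zero_iff [IsDomain R] {a u : Fin n → R} (hu : ∀ i, u i ∈ S i) :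
    eval (Fin.cons 1 u) (lagrangeForm S a) = 0 ↔ u ≠ a := by
  simp only [lagrangeForm, eval_prod, eval_sub, eval_mul, eval_X, eval_C, Fin.cons_succ,
    Fin.cons_zero, mul_one, Finset.prod_eq_zero_iff, sub_eq_zero, Function.ne_iff]
  simp [hu]

end LagrangeForm

section Grid

/-- The finite Cartesian product `∏ Sᵢ`, as a set of points of affine space. -/
abbrev cartesianGrid {α : Type*} {n : ℕ} (S : Fin n → Finset α) : Set (Fin n → α) :=
  (Fintype.piFinset S : Finset (Fin n → α))

variable {K : Type*} [Field K] {n d : ℕ} {S : Fin n → Finset K}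

theorem formFunctions_cartesianGrid_eq_top (hd : ∑ i, ((S i).card - 1) ≤ d) :
    formFunctions (cartesianGrid S) d = ⊤ := by
  classical
  rw [eq_top_iff, ← (Pi.basisFun K _).span_eq, Submodule.span_le]
  rintro _ ⟨a, rfl⟩
  have mem_grid (u : cartesianGrid S) : ∀ i, u.1 i ∈ S i := Fintype.mem_piFinset.1 u.2
  set c := eval (Fin.cons 1 a.1) (lagrangeForm S a.1)
  have hc : c ≠ 0 := fun h => (eval_lagrangeForm_eq_zero_iff (mem_grid a)).1 h rfl
  refine mem_formFunctions.2
    ⟨C c⁻¹ * (X 0 ^ (d - ∑ i, ((S i).card - 1)) * lagrangeForm S a.1), ?_, fun u => ?_⟩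
  · have hhom := (isHomogeneous_X_pow (R := K) (0 : Fin (n + 1)) (d - ∑ i, ((S i).card - 1))).mul
      (isHomogeneous_lagrangeForm (mem_grid a))
    rw [Nat.sub_add_cancel hd] at hhom
    exact hhom.C_mul c⁻¹
  · rw [Pi.basisFun_apply]
    obtain rfl | hne := eq_or_ne u a
    · simp [c, hc]
    · have hzero := (eval_lagrangeForm_eq_zero_iff (mem_grid u)).2 (Subtype.coe_injective.ne hne)
      simp [hne, hzero]

/-- The iterated divided difference over the grid `∏ Sᵢ`, with one divided difference
`∑_{x ∈ Sᵢ} f(x) / ∏_{b ≠ x} (x - b)` taken in each coordinate. -/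
noncomputable def gridDividedDifference [DecidableEq K] (S : Fin n → Finset K) :
    (cartesianGrid S → K) →ₗ[K] K :=
  ∑ u, (∏ i, Lagrange.nodalWeight (S i) id (u.1 i)) • LinearMap.proj u

theorem gridDividedDifference_apply [DecidableEq K] (f : cartesianGrid S → K) :
    gridDividedDifference S f = ∑ u, (∏ i, Lagrange.nodalWeight (S i) id (u.1 i)) * f u := by
  simp [gridDividedDifference]

theorem sum_cartesianGrid_nodalWeight_mul_monomial [DecidableEq K] (m : Fin (n + 1) → ℕ) :
    ∑ u : cartesianGrid S, (∏ i, Lagrange.nodalWeight (S i) id (u.1 i)) *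
        ∏ j, (Fin.cons 1 u.1 : Fin (n + 1) → K) j ^ m j =
      ∏ i, ∑ x ∈ S i, Lagrange.nodalWeight (S i) id x * x ^ m i.succ := by
  simp only [Fin.prod_univ_succ, Fin.cons_zero, Fin.cons_succ, one_pow, one_mul,
    ← Finset.prod_mul_distrib, Finset.prod_univ_sum]
  exact Finset.sum_coe_sort (Fintype.piFinset S) fun u =>
    ∏ i, Lagrange.nodalWeight (S i) id (u i) * u i ^ m i.succ

theorem gridDividedDifference_eq_zero_of_mem_formFunctions [DecidableEq K]
    (hd : d < ∑ i, ((S i).card - 1)) {f : cartesianGrid S → K}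
    (hf : f ∈ formFunctions (cartesianGrid S) d) : gridDividedDifference S f = 0 := by
  obtain ⟨F, hF, hfF⟩ := mem_formFunctions.1 hf
  simp only [gridDividedDifference_apply, hfF, eval_eq', Finset.mul_sum]
  rw [Finset.sum_comm]
  refine Finset.sum_eq_zero fun m hm => ?_
  obtain ⟨i, hi⟩ := exists_succ_lt_of_mem_support hF hd hm
  simp only [mul_left_comm _ (coeff m F)]
  rw [← Finset.mul_sum, sum_cartesianGrid_nodalWeight_mul_monomial,
    Finset.prod_eq_zero (Finset.mem_univ i) (sum_nodalWeight_mul_pow_eq_zero hi), mul_zero]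

theorem gridDividedDifference_ne_zero [DecidableEq K] (hS : ∀ i, (S i).Nonempty) :
    gridDividedDifference S ≠ 0 := by
  obtain ⟨a, ha⟩ := Fintype.piFinset_nonempty.2 hS
  intro hzero
  have hsingle := LinearMap.congr_fun hzero (Pi.single (⟨a, ha⟩ : cartesianGrid S) 1)
  simp only [gridDividedDifference_apply, Pi.single_apply, mul_ite, mul_one, mul_zero,
    Finset.sum_ite_eq', Finset.mem_univ, if_true, LinearMap.zero_apply] at hsingle
  exact Finset.prod_ne_zero_iff.2 (fun i _ => Lagrange.nodalWeight_ne_zero (Set.injOn_id _)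
    (Fintype.mem_piFinset.1 ha i)) hsingle

theorem formFunctions_cartesianGrid_ne_top (hS : ∀ i, (S i).Nonempty)
    (hd : d < ∑ i, ((S i).card - 1)) : formFunctions (cartesianGrid S) d ≠ ⊤ := by
  classical
  intro htop
  exact gridDividedDifference_ne_zero hS <| LinearMap.ext fun f =>
    gridDividedDifference_eq_zero_of_mem_formFunctions hd (htop ▸ Submodule.mem_top)

end Grid

theorem projTorus_eq_image_affinePoint (K : Type) [Field K] [Fintype K] [DecidableEq K] (n : ℕ) :
    projTorus K (n + 1) =
      affinePoint '' cartesianGrid fun _ : Fin n => (Finset.univ.erase 0 : Finset K) := by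
  ext p
  constructor
  · intro hp
    exact ⟨_, by simpa using fun i => ⟨hp (Fin.succ i), hp 0⟩, affinePoint_rep_div (hp 0)⟩
  · rintro ⟨u, hu, rfl⟩
    obtain ⟨c, hc, hrep⟩ := exists_rep_affinePoint_eq_smul u
    have hu' : ∀ i, u i ≠ 0 := by simpa using hu
    intro i
    rw [hrep]
    cases i using Fin.cases <;> simp [hc, hu']

theorem stmt_8_general {K : Type} [Field K] {n : ℕ} {S : Fin n → Finset K}
    (hS : ∀ i, (S i).Nonempty) :
    (affinePoint '' cartesianGrid S).ncard = ∏ i, (S i).card ∧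
    (∀ d, ∑ i, ((S i).card - 1) ≤ d →
      hilbFn K (affinePoint '' cartesianGrid S) 0 d = ∏ i, (S i).card) ∧
    (∀ d, d < ∑ i, ((S i).card - 1) →
      hilbFn K (affinePoint '' cartesianGrid S) 0 d < ∏ i, (S i).card) := by
  have hrank : Module.finrank K (cartesianGrid S → K) = ∏ i, (S i).card := by
    simp [Module.finrank_fintype_fun_eq_card]
  refine ⟨?_, fun d hd => ?_, fun d hd => ?_⟩
  · rw [Set.ncard_image_of_injective _ affinePoint_injective, Set.ncard_coe_finset,
      Fintype.card_piFinset]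
  · rw [hilbFn_image_affinePoint, formFunctions_cartesianGrid_eq_top hd, finrank_top, hrank]
  · rw [hilbFn_image_affinePoint, ← hrank]
    exact Submodule.finrank_lt (formFunctions_cartesianGrid_ne_top hS hd)

/-- The projective torus `T ⊆ ℙ^(s-1)` over a finite field with `q` elements has
`(q-1)^(s-1)` points; the Hilbert function `H_T(d)` equals `(q-1)^(s-1)` for all
`d ≥ (s-1)(q-2)` and, when `q ≥ 3`, is strictly smaller at `d = (s-1)(q-2) - 1`:
the index of regularity is `(s-1)(q-2)` and the degree is `(q-1)^(s-1)`. -/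
theorem stmt_8 (K : Type) [Field K] [Fintype K] (q s : ℕ)
    (hK : Fintype.card K = q) (hs : 2 ≤ s) :
    Set.ncard (projTorus K s) = (q - 1) ^ (s - 1) ∧
    (∀ d : ℕ, (s - 1) * (q - 2) ≤ d →
      hilbFn K (projTorus K s) (⟨0, by omega⟩ : Fin s) d = (q - 1) ^ (s - 1)) ∧
    (3 ≤ q →
      hilbFn K (projTorus K s) (⟨0, by omega⟩ : Fin s) ((s - 1) * (q - 2) - 1) <
        (q - 1) ^ (s - 1)) := by
  classical
  obtain ⟨n, rfl⟩ : ∃ n, s = n + 1 := ⟨s - 1, by omega⟩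
  have hS : (Finset.univ.erase 0 : Finset K).Nonempty := ⟨1, by simp⟩
  obtain ⟨hcard, heq, hlt⟩ := stmt_8_general fun _ : Fin n => hS
  simp only [← projTorus_eq_image_affinePoint, Finset.card_erase_of_mem (Finset.mem_univ _),
    Finset.card_univ, hK, Finset.prod_const, Finset.sum_const, Fintype.card_fin, smul_eq_mul,
    Nat.sub_sub] at hcard heq hlt
  refine ⟨hcard, heq, fun hq => hlt _ (Nat.sub_lt (Nat.mul_pos ?_ ?_) one_pos)⟩ <;> omega
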